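/- arXiv:1006.5636 — 3 statements merged into one kernel-verified Lean document; each statement's English description precedes it below -/
import Mathlib

section
/- Let L be a finite-dimensional Lie algebra over a field F, let M be a maximal subalgebra of L, and let C and D be ideal completions of M in L. Then the quotient Lie algebras C/k(C) and D/k(D) are isomorphic. -/
/-- The strict core `k(B)` of a subalgebra `B` of `L`: the sum of all ideals of `L` that are
proper subalgebras of `B`. -/
def strictCore {F L : Type*} [Field F] [LieRing L] [LieAlgebra F L]
    (B : LieSubalgebra F L) : LieIdeal F L :=
  sSup {I : LieIdeal F L | (I : LieSubalgebra F L) < B}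

/-- `C` is a completion of the maximal subalgebra `M` of `L` if `C` is not contained in `M`
but every proper subalgebra of `C` that is an ideal of `L` is contained in `M`.
The set of completions of `M` is the index complex `I(M)`. -/
def IsCompletion {F L : Type*} [Field F] [LieRing L] [LieAlgebra F L]
    (M C : LieSubalgebra F L) : Prop :=
  ¬ C ≤ M ∧ ∀ I : LieIdeal F L, (I : LieSubalgebra F L) < C → (I : LieSubalgebra F L) ≤ M

/-- A maximal completion of `M`: a maximal element of the index complex `I(M)` under inclusion. -/
def IsMaxCompletion {F L : Type*} [Field F] [LieRing L] [LieAlgebra F L]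
    (M C : LieSubalgebra F L) : Prop :=
  IsCompletion M C ∧ ∀ D : LieSubalgebra F L, IsCompletion M D → C ≤ D → C = D

/-- The quotient of a subalgebra `C` of `L` by (the pullback along the inclusion of) an ideal
`K` of `L`. -/
abbrev quotIn {F L : Type*} [Field F] [LieRing L] [LieAlgebra F L]
    (C : LieSubalgebra F L) (K : LieIdeal F L) : Type _ :=
  C ⧸ LieIdeal.comap C.incl K

/-- The quotient Lie algebra `C / k(C)`. -/
abbrev quotCore {F L : Type*} [Field F] [LieRing L] [LieAlgebra F L]
    (C : LieSubalgebra F L) : Type _ :=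
  quotIn C (strictCore C)

/-- The largest ideal of `L` contained in the subalgebra `B`, denoted `B_L`. -/
def idealCore {F L : Type*} [Field F] [LieRing L] [LieAlgebra F L]
    (B : LieSubalgebra F L) : LieIdeal F L :=
  sSup {I : LieIdeal F L | (I : LieSubalgebra F L) ≤ B}

/-- A subalgebra `B` of `L` is a c-ideal of `L` if there is an ideal `C` of `L` such that
`L = B + C` and `B ∩ C ≤ B_L`. -/
def IsCIdeal {F L : Type*} [Field F] [LieRing L] [LieAlgebra F L]
    (B : LieSubalgebra F L) : Prop :=
  ∃ C : LieIdeal F L, B ⊔ (C : LieSubalgebra F L) = ⊤ ∧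
    B ⊓ (C : LieSubalgebra F L) ≤ (idealCore B : LieSubalgebra F L)

/-- A Lie algebra is supersolvable if it has a chain of ideals
`0 = I_0 ⊆ I_1 ⊆ ... ⊆ I_n = L` with `dim I_j = j` for each `j`. -/
def IsSupersolvableLieAlgebra (F L : Type*) [Field F] [LieRing L] [LieAlgebra F L] : Prop :=
  ∃ (n : ℕ) (I : Fin (n + 1) → LieIdeal F L), I 0 = ⊥ ∧ I (Fin.last n) = ⊤ ∧
    Monotone I ∧ ∀ j : Fin (n + 1), Module.finrank F (I j) = (j : ℕ)

/-- The natural quotient map `L → L ⧸ B` as a morphism of Lie algebras. -/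
def lieQuotMk {F L : Type*} [Field F] [LieRing L] [LieAlgebra F L] (B : LieIdeal F L) :
    L →ₗ⁅F⁆ L ⧸ B :=
  { (LieSubmodule.Quotient.mk' B).toLinearMap with
    map_lie' := rfl }

/-- A subalgebra `C` of `L` is a subideal of `L` if there is a chain of subalgebras
`C = C_0 ⊆ C_1 ⊆ ... ⊆ C_n = L` in which each `C_i` is an ideal of `C_{i+1}`. -/
def IsSubideal {F L : Type*} [Field F] [LieRing L] [LieAlgebra F L]
    (C : LieSubalgebra F L) : Prop :=
  ∃ (n : ℕ) (f : Fin (n + 1) → LieSubalgebra F L), f 0 = C ∧ f (Fin.last n) = ⊤ ∧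
    ∀ i : Fin n, f i.castSucc ≤ f i.succ ∧
      ∀ x ∈ f i.succ, ∀ y ∈ f i.castSucc, ⁅x, y⁆ ∈ f i.castSucc

/-- The Frattini subalgebra: the intersection of all maximal subalgebras of `L`. -/
def frattiniSubalgebra (F L : Type*) [Field F] [LieRing L] [LieAlgebra F L] :
    LieSubalgebra F L :=
  sInf {M : LieSubalgebra F L | IsCoatom M}

/-- The Frattini ideal: the largest ideal of `L` contained in the Frattini subalgebra. -/
def frattiniIdeal (F L : Type*) [Field F] [LieRing L] [LieAlgebra F L] : LieIdeal F L :=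
  idealCore (frattiniSubalgebra F L)

/-- Two subalgebras that agree modulo an ideal `K` have isomorphic quotients by their
intersections with `K`; these intersections may be cut out by other ideals `I` and `J`. -/
theorem nonempty_quotIn_equiv_of_modEq {F L : Type*} [Field F] [LieRing L] [LieAlgebra F L]
    {A B : LieSubalgebra F L} {I J K : LieIdeal F L}
    (hI : ∀ x ∈ A, x ∈ I ↔ x ∈ K) (hJ : ∀ x ∈ B, x ∈ J ↔ x ∈ K)
    (hAB : ∀ a ∈ A, ∃ b ∈ B, a - b ∈ K) (hBA : ∀ b ∈ B, ∃ a ∈ A, a - b ∈ K) :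
    Nonempty (quotIn A I ≃ₗ⁅F⁆ quotIn B J) := by
  let f : A →ₗ⁅F⁆ L ⧸ K := (lieQuotMk K).comp A.incl
  let g : B →ₗ⁅F⁆ L ⧸ K := (lieQuotMk K).comp B.incl
  have mk_eq (x y : L) : lieQuotMk K x = lieQuotMk K y ↔ x - y ∈ K :=
    Submodule.Quotient.eq K.toSubmodule
  have mk_zero (x : L) : lieQuotMk K x = 0 ↔ x ∈ K :=
    Submodule.Quotient.mk_eq_zero K.toSubmodule
  have hf : LieIdeal.comap A.incl I = f.ker := by
    ext x
    rw [LieIdeal.mem_comap, LieHom.mem_ker]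
    exact (hI x x.2).trans (mk_zero x).symm
  have hg : LieIdeal.comap B.incl J = g.ker := by
    ext x
    rw [LieIdeal.mem_comap, LieHom.mem_ker]
    exact (hJ x x.2).trans (mk_zero x).symm
  have hfg : f.range = g.range := by
    ext y
    simp only [LieHom.mem_range]
    constructor
    · rintro ⟨⟨a, ha⟩, rfl⟩
      obtain ⟨b, hb, h⟩ := hAB a ha
      exact ⟨⟨b, hb⟩, ((mk_eq a b).2 h).symm⟩
    · rintro ⟨⟨b, hb⟩, rfl⟩
      obtain ⟨a, ha, h⟩ := hBA b hb
      exact ⟨⟨a, ha⟩, (mk_eq a b).2 h⟩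
  unfold quotIn
  rw [hf, hg]
  have e := f.quotKerEquivRange
  rw [hfg] at e
  exact ⟨e.trans g.quotKerEquivRange.symm⟩

/-- A maximal subalgebra and an ideal not contained in it together span the Lie algebra. -/
theorem exists_add_eq_of_isCoatom {F L : Type*} [Field F] [LieRing L] [LieAlgebra F L]
    {M : LieSubalgebra F L} (hM : IsCoatom M) {C : LieIdeal F L}
    (hC : ¬ (C : LieSubalgebra F L) ≤ M) (x : L) : ∃ m ∈ M, ∃ c ∈ C, m + c = x := by
  let S : LieSubalgebra F L :=
    { M.toSubmodule ⊔ C.toSubmodule with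
      lie_mem' := by
        intro x y hx hy
        obtain ⟨m, hm, c, hc, rfl⟩ := Submodule.mem_sup.1 hx
        obtain ⟨n, hn, d, hd, rfl⟩ := Submodule.mem_sup.1 hy
        refine Submodule.mem_sup.2 ⟨⁅m, n⁆, M.lie_mem hm hn, ⁅m, d⁆ + ⁅c, n + d⁆,
          C.add_mem (lie_mem_right F L C m d hd) (lie_mem_left F L C c (n + d) hc), ?_⟩
        simp only [lie_add, add_lie]
        abel }
  have hMS : M ≤ S := fun y hy => Submodule.mem_sup_left (T := C.toSubmodule) hy
  have hCS : (C : LieSubalgebra F L) ≤ S :=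
    fun y hy => Submodule.mem_sup_right (S := M.toSubmodule) hy
  have hS : S = ⊤ := hM.2 S (lt_of_le_of_ne hMS fun h => hC (h ▸ hCS))
  have hx : x ∈ S := hS ▸ LieSubalgebra.mem_top x
  exact Submodule.mem_sup.1 hx

/-- Every ideal of `L` properly contained in `B` is contained in the strict core of `B`. -/
theorem le_strictCore {F L : Type*} [Field F] [LieRing L] [LieAlgebra F L]
    {B : LieSubalgebra F L} {I : LieIdeal F L} (h : (I : LieSubalgebra F L) < B) :
    I ≤ strictCore B :=
  le_sSup h

theorem strictCore_le {F L : Type*} [Field F] [LieRing L] [LieAlgebra F L]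
    (C : LieIdeal F L) : strictCore (C : LieSubalgebra F L) ≤ C :=
  sSup_le fun _ hI => hI.le

/-- The strict core of a completion of `M` is contained in `M`. -/
theorem IsCompletion.mem_of_mem_strictCore {F L : Type*} [Field F] [LieRing L] [LieAlgebra F L]
    {M C : LieSubalgebra F L} (hC : IsCompletion M C) {x : L} (hx : x ∈ strictCore C) :
    x ∈ M := by
  have h : (strictCore C).toSubmodule ≤ M.toSubmodule := by
    rw [strictCore, LieSubmodule.sSup_toSubmodule_eq_iSup]
    exact iSup₂_le fun I hI => hC.2 I hI
  exact h hx

/-- Distinct ideal completions of `M` intersect in the strict core of either one. -/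
theorem IsCompletion.inf_le_strictCore {F L : Type*} [Field F] [LieRing L] [LieAlgebra F L]
    {M : LieSubalgebra F L} {C D : LieIdeal F L}
    (hC : IsCompletion M (C : LieSubalgebra F L)) (hD : IsCompletion M (D : LieSubalgebra F L))
    (hCD : C ≠ D) : C ⊓ D ≤ strictCore (C : LieSubalgebra F L) := by
  refine le_strictCore (lt_of_le_not_ge (fun x hx => hx.1) fun h => ?_)
  have hle : C ≤ D := fun x hx => (h hx).2
  exact hC.1 (hD.2 C (lt_of_le_not_ge hle fun h' => hCD (le_antisymm hle h')))

/-- If `C` and `D` are distinct ideal completions of the maximal subalgebra `M`, then `M ∩ D` is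
contained in the strict core of `D`. -/
theorem IsCompletion.mem_strictCore_of_mem {F L : Type*} [Field F] [LieRing L] [LieAlgebra F L]
    {M : LieSubalgebra F L} (hM : IsCoatom M) {C D : LieIdeal F L}
    (hC : IsCompletion M (C : LieSubalgebra F L)) (hD : IsCompletion M (D : LieSubalgebra F L))
    (hCD : C ≠ D) {x : L} (hxM : x ∈ M) (hxD : x ∈ D) :
    x ∈ strictCore (D : LieSubalgebra F L) := by
  let I : LieIdeal F L :=
    { M.toSubmodule ⊓ D.toSubmodule with
      lie_mem := by
        rintro y z ⟨hzM, hzD⟩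
        refine ⟨?_, lie_mem_right F L D y z hzD⟩
        obtain ⟨m, hm, c, hc, rfl⟩ := exists_add_eq_of_isCoatom hM hC.1 y
        have h : ⁅c, z⁆ ∈ C ⊓ D := ⟨lie_mem_left F L C c z hc, lie_mem_right F L D c z hzD⟩
        rw [add_lie]
        exact M.add_mem (M.lie_mem hm hzM)
          (hC.mem_of_mem_strictCore (hC.inf_le_strictCore hD hCD h)) }
  have hI : (I : LieSubalgebra F L) < (D : LieSubalgebra F L) :=
    lt_of_le_not_ge (fun y hy => hy.2) fun h => hD.1 fun y hy => (h hy).1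
  exact le_strictCore hI ⟨hxM, hxD⟩

/-- For distinct ideal completions `C` and `D` of the maximal subalgebra `M`, the quotient
`C / k(C)` is isomorphic to the quotient of `M ∩ (C + D)` by `k(C) + k(D)`. -/
theorem IsCompletion.nonempty_quotCore_equiv {F L : Type*} [Field F] [LieRing L] [LieAlgebra F L]
    {M : LieSubalgebra F L} (hM : IsCoatom M) {C D : LieIdeal F L}
    (hC : IsCompletion M (C : LieSubalgebra F L)) (hD : IsCompletion M (D : LieSubalgebra F L))
    (hCD : C ≠ D) :
    Nonempty (quotCore (C : LieSubalgebra F L) ≃ₗ⁅F⁆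
      quotIn (M ⊓ ((C ⊔ D : LieIdeal F L) : LieSubalgebra F L))
        (strictCore (C : LieSubalgebra F L) ⊔ strictCore (D : LieSubalgebra F L))) := by
  have hkC := strictCore_le C
  have hkD := strictCore_le D
  refine nonempty_quotIn_equiv_of_modEq (K := strictCore (C : LieSubalgebra F L) ⊔ D) ?_ ?_ ?_ ?_
  · refine fun x hx => ⟨fun h => (le_sup_left : _ ≤ _ ⊔ D) h, fun h => ?_⟩
    obtain ⟨k, hk, d, hd, rfl⟩ := (LieSubmodule.mem_sup _ _ _).1 h
    have hdC : d ∈ C := (add_mem_cancel_left (hkC hk)).1 hx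
    exact add_mem hk (hC.inf_le_strictCore hD hCD ⟨hdC, hd⟩)
  · refine fun x hx => ⟨fun h => sup_le_sup_left hkD _ h, fun h => ?_⟩
    obtain ⟨k, hk, d, hd, rfl⟩ := (LieSubmodule.mem_sup _ _ _).1 h
    have hdM : d ∈ M := (add_mem_cancel_left (hC.mem_of_mem_strictCore hk)).1 hx.1
    exact (LieSubmodule.mem_sup _ _ _).2 ⟨k, hk, d, hC.mem_strictCore_of_mem hM hD hCD hdM hd, rfl⟩
  · intro c hc
    obtain ⟨m, hm, d, hd, rfl⟩ := exists_add_eq_of_isCoatom hM hD.1 c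
    refine ⟨m, ⟨hm, (LieSubmodule.mem_sup _ _ _).2 ⟨m + d, hc, -d, neg_mem hd, by abel⟩⟩, ?_⟩
    rw [add_sub_cancel_left]
    exact (le_sup_right : D ≤ _) hd
  · rintro b ⟨-, hb⟩
    obtain ⟨c, hc, d, hd, rfl⟩ := (LieSubmodule.mem_sup _ _ _).1 hb
    refine ⟨c, hc, ?_⟩
    rw [sub_add_cancel_left]
    exact (le_sup_right : D ≤ _) (neg_mem hd)

/-- If `C` and `D` are ideal completions of the maximal subalgebra `M` of `L`,
then `C/k(C) ≅ D/k(D)`. -/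
theorem statement1 {F L : Type*} [Field F] [LieRing L] [LieAlgebra F L] [FiniteDimensional F L]
    (M : LieSubalgebra F L) (hM : IsCoatom M)
    (C D : LieIdeal F L)
    (hC : IsCompletion M (C : LieSubalgebra F L))
    (hD : IsCompletion M (D : LieSubalgebra F L)) :
    Nonempty (quotCore (C : LieSubalgebra F L) ≃ₗ⁅F⁆ quotCore (D : LieSubalgebra F L)) := by
  rcases eq_or_ne C D with rfl | hCD
  · exact ⟨LieEquiv.refl⟩
  obtain ⟨e⟩ := hC.nonempty_quotCore_equiv hM hD hCD
  obtain ⟨e'⟩ := hD.nonempty_quotCore_equiv hM hC hCD.symm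
  rw [sup_comm D C, sup_comm (strictCore (D : LieSubalgebra F L))] at e'
  exact ⟨e.trans e'.symm⟩
end

section
/- Let L be a finite-dimensional Lie algebra over a field F and let M be a maximal subalgebra of L. Then M is a c-ideal of L if and only if every ideal completion C of M in L satisfies dim(C/k(C)) = dim L − dim M. -/
section

variable {F L : Type*} [Field F] [LieRing L] [LieAlgebra F L]

/-- The linear sum of a subalgebra and an ideal is the subalgebra they generate. -/
theorem LieSubalgebra.toSubmodule_sup_lieIdeal (M : LieSubalgebra F L) (C : LieIdeal F L) :
    (M ⊔ (C : LieSubalgebra F L)).toSubmodule = M.toSubmodule ⊔ C.toSubmodule := by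
  let S : LieSubalgebra F L :=
    { M.toSubmodule ⊔ C.toSubmodule with
      lie_mem' := by
        intro x y hx hy
        obtain ⟨m, hm, c, hc, rfl⟩ := Submodule.mem_sup.1 hx
        obtain ⟨n, hn, d, hd, rfl⟩ := Submodule.mem_sup.1 hy
        refine Submodule.mem_sup.2 ⟨⁅m, n⁆, M.lie_mem hm hn, ⁅m, d⁆ + ⁅c, n + d⁆, ?_, ?_⟩
        · exact C.add_mem (lie_mem_right F L C m d hd) (lie_mem_left F L C c (n + d) hc)
        · simp only [add_lie, lie_add]
          abel }
  have hS : M ⊔ (C : LieSubalgebra F L) ≤ S :=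
    sup_le (show M.toSubmodule ≤ M.toSubmodule ⊔ C.toSubmodule from le_sup_left)
      (show C.toSubmodule ≤ M.toSubmodule ⊔ C.toSubmodule from le_sup_right)
  refine le_antisymm hS (sup_le ?_ ?_)
  · exact (le_sup_left : M ≤ M ⊔ (C : LieSubalgebra F L))
  · exact (le_sup_right : (C : LieSubalgebra F L) ≤ M ⊔ (C : LieSubalgebra F L))

theorem IsCoatom.toSubmodule_sup_lieIdeal {M : LieSubalgebra F L} (hM : IsCoatom M)
    {C : LieIdeal F L} (hC : ¬ (C : LieSubalgebra F L) ≤ M) :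
    M.toSubmodule ⊔ C.toSubmodule = ⊤ := by
  rw [← M.toSubmodule_sup_lieIdeal C, hM.2 _ (left_lt_sup.2 hC)]
  rfl

theorem IsCompletion.strictCore_le {M C : LieSubalgebra F L} (h : IsCompletion M C) :
    (strictCore C).toSubmodule ≤ M.toSubmodule ⊓ C.toSubmodule := by
  rw [strictCore, LieSubmodule.sSup_toSubmodule]
  refine sSup_le ?_
  rintro _ ⟨I, hI, rfl⟩
  exact le_inf (h.2 I hI) hI.le

/-- An ideal contained in `M ∩ C` lies in the strict core of a completion `C` of `M`. -/
theorem IsCompletion.le_strictCore {M C : LieSubalgebra F L} (h : IsCompletion M C)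
    {I : LieIdeal F L} (hM : (I : LieSubalgebra F L) ≤ M) (hC : (I : LieSubalgebra F L) ≤ C) :
    I ≤ strictCore C :=
  le_sSup (hC.lt_of_ne fun e => h.1 (e ▸ hM))

theorem idealCore_toLieSubalgebra_le (M : LieSubalgebra F L) :
    (idealCore M : LieSubalgebra F L) ≤ M := by
  change (idealCore M).toSubmodule ≤ M.toSubmodule
  rw [idealCore, LieSubmodule.sSup_toSubmodule]
  refine sSup_le ?_
  rintro _ ⟨I, hI, rfl⟩
  exact hI

/-- For an ideal completion `C` of `M`, the dimension condition says that `M ∩ C = k(C)`. -/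
theorem IsCompletion.finrank_quotCore_eq_iff [FiniteDimensional F L] {M : LieSubalgebra F L}
    (hM : IsCoatom M) {C : LieIdeal F L} (h : IsCompletion M (C : LieSubalgebra F L)) :
    Module.finrank F (quotCore (C : LieSubalgebra F L)) =
        Module.finrank F L - Module.finrank F M ↔
      M.toSubmodule ⊓ C.toSubmodule ≤ (strictCore (C : LieSubalgebra F L)).toSubmodule := by
  set K := (strictCore (C : LieSubalgebra F L)).toSubmodule
  have hK : K ≤ M.toSubmodule ⊓ C.toSubmodule := h.strictCore_le
  have hsum : Module.finrank F (⊤ : Submodule F L) +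
      Module.finrank F (M.toSubmodule ⊓ C.toSubmodule : Submodule F L) =
      Module.finrank F M.toSubmodule + Module.finrank F C.toSubmodule := by
    rw [← hM.toSubmodule_sup_lieIdeal h.1]
    exact Submodule.finrank_sup_add_finrank_inf_eq _ _
  rw [finrank_top] at hsum
  have hquot : Module.finrank F (quotCore (C : LieSubalgebra F L)) + Module.finrank F K =
      Module.finrank F C.toSubmodule := by
    rw [← (Submodule.comapSubtypeEquivOfLe (hK.trans inf_le_right)).finrank_eq]
    exact Submodule.finrank_quotient_add_finrank (K.comap C.toSubmodule.subtype)
  have hle : Module.finrank F M.toSubmodule ≤ Module.finrank F L := Submodule.finrank_le _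
  change _ = Module.finrank F L - Module.finrank F M.toSubmodule ↔ _
  constructor
  · intro e
    exact (Submodule.eq_of_le_of_finrank_eq hK (by omega)).ge
  · intro e
    have := congrArg (fun S : Submodule F L => Module.finrank F S) (le_antisymm hK e)
    omega

/-- A maximal subalgebra that is a c-ideal meets each of its ideal completions in the
strict core. -/
theorem IsCIdeal.inf_le_strictCore {M : LieSubalgebra F L} (hM : IsCIdeal M)
    {C : LieIdeal F L} (h : IsCompletion M (C : LieSubalgebra F L)) :
    M.toSubmodule ⊓ C.toSubmodule ≤ (strictCore (C : LieSubalgebra F L)).toSubmodule := by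
  obtain ⟨B, hsup, hinf⟩ := hM
  by_cases hCB : C ≤ B
  · rintro x ⟨hxM, hxC⟩
    have hx : x ∈ idealCore M ⊓ C := ⟨hinf ⟨hxM, hCB hxC⟩, hxC⟩
    refine h.le_strictCore (I := idealCore M ⊓ C) ?_ ?_ hx
    · exact fun y hy => idealCore_toLieSubalgebra_le M hy.1
    · exact fun y hy => hy.2
  · have hCBM : ∀ x ∈ C, x ∈ B → x ∈ M := fun x hxC hxB =>
      h.2 (C ⊓ B) (lt_of_le_of_ne (fun y hy => hy.1) fun e => hCB fun y hy =>
        (e.ge (show y ∈ (C : LieSubalgebra F L) from hy) : y ∈ C ⊓ B).2) ⟨hxC, hxB⟩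
    have htop : M.toSubmodule ⊔ B.toSubmodule = ⊤ := by
      rw [← M.toSubmodule_sup_lieIdeal B, hsup]
      rfl
    let I : LieIdeal F L :=
      { M.toSubmodule ⊓ C.toSubmodule with
        lie_mem := by
          rintro x y ⟨hyM, hyC⟩
          obtain ⟨m, hm, b, hb, rfl⟩ := Submodule.mem_sup.1 (htop.ge (Submodule.mem_top (x := x)))
          refine ⟨?_, lie_mem_right F L C _ y hyC⟩
          rw [add_lie]
          exact M.add_mem (M.lie_mem hm hyM)
            (hCBM _ (lie_mem_right F L C b y hyC) (lie_mem_left F L B b y hb)) }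
    exact h.le_strictCore (I := I) (fun y hy => hy.1) (fun y hy => hy.2)

/-- A minimal ideal among those not contained in `M` is a completion of `M`. -/
theorem exists_lieIdeal_isCompletion [FiniteDimensional F L] {M : LieSubalgebra F L}
    (hM : M ≠ ⊤) : ∃ C : LieIdeal F L, IsCompletion M (C : LieSubalgebra F L) := by
  obtain ⟨C, hC, hmin⟩ := (LieSubmodule.wellFoundedLT_of_isArtinian F L L).wf.has_min
    {I | ¬ (I : LieSubalgebra F L) ≤ M}
    ⟨⊤, fun h => hM (top_le_iff.1 fun x _ => h (LieSubmodule.mem_top (R := F) (L := L) x))⟩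
  exact ⟨C, hC, fun I hI => not_not.1 fun hIM => hmin I hIM hI⟩

end

/-- A maximal subalgebra `M` of `L` is a c-ideal of `L` if and only if every
ideal completion `C` of `M` satisfies `dim (C/k(C)) = dim L - dim M`. -/
theorem statement4 {F L : Type*} [Field F] [LieRing L] [LieAlgebra F L] [FiniteDimensional F L]
    (M : LieSubalgebra F L) (hM : IsCoatom M) :
    IsCIdeal M ↔ ∀ C : LieIdeal F L, IsCompletion M (C : LieSubalgebra F L) →
      Module.finrank F (quotCore (C : LieSubalgebra F L)) =
        Module.finrank F L - Module.finrank F M := by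
  constructor
  · intro h C hC
    exact (hC.finrank_quotCore_eq_iff hM).2 (h.inf_le_strictCore hC)
  · intro h
    obtain ⟨C, hC⟩ := exists_lieIdeal_isCompletion hM.1
    have hle := (hC.finrank_quotCore_eq_iff hM).1 (h C hC)
    refine ⟨C, hM.2 _ (left_lt_sup.2 hC.1), fun x hx => ?_⟩
    have hcore : strictCore (C : LieSubalgebra F L) ≤ idealCore M :=
      le_sSup fun y hy => (hC.strictCore_le hy).1
    exact hcore (hle hx)
end

section
/- Let L be a finite-dimensional Lie algebra over a field F. Let F*(L) be the intersection of all maximal subalgebras of L which have no abelian ideal completion (with F*(L) = L if no such maximal subalgebras exist), and let φ*(L) be the largest ideal of L contained in F*(L). Then φ*(L) equals the solvable radical R(L) of L. -/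
section Helpers

variable {F L : Type*} [Field F] [LieRing L] [LieAlgebra F L]

/-- The sum of a subalgebra and an ideal, as a subalgebra. -/
def LieSubalgebra.addIdeal (B : LieSubalgebra F L) (I : LieIdeal F L) : LieSubalgebra F L where
  toSubmodule := B.toSubmodule ⊔ I.toSubmodule
  lie_mem' := by
    intro x y hx hy
    obtain ⟨b, hb, i, hi, rfl⟩ := Submodule.mem_sup.mp hx
    obtain ⟨c, hc, j, hj, rfl⟩ := Submodule.mem_sup.mp hy
    refine Submodule.mem_sup.mpr ⟨⁅b, c⁆, B.lie_mem hb hc, ⁅b, j⁆ + ⁅i, c + j⁆, ?_, ?_⟩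
    · exact I.add_mem (lie_mem_right F L I b j hj) (lie_mem_left F L I i (c + j) hi)
    · simp only [lie_add, add_lie]
      abel

lemma LieSubalgebra.mem_addIdeal {B : LieSubalgebra F L} {I : LieIdeal F L} {x : L} :
    x ∈ B.addIdeal I ↔ ∃ b ∈ B, ∃ i ∈ I, b + i = x :=
  Submodule.mem_sup

lemma LieSubalgebra.le_addIdeal_left (B : LieSubalgebra F L) (I : LieIdeal F L) :
    B ≤ B.addIdeal I :=
  fun x hx ↦ mem_addIdeal.mpr ⟨x, hx, 0, I.zero_mem, add_zero x⟩

lemma LieSubalgebra.le_addIdeal_right (B : LieSubalgebra F L) (I : LieIdeal F L) :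
    (I : LieSubalgebra F L) ≤ B.addIdeal I :=
  fun x hx ↦ mem_addIdeal.mpr ⟨0, B.zero_mem, x, hx, zero_add x⟩

lemma IsCoatom.exists_add_eq_of_not_ideal_le {M : LieSubalgebra F L} (hM : IsCoatom M)
    {C : LieIdeal F L} (hC : ¬ (C : LieSubalgebra F L) ≤ M) (x : L) :
    ∃ m ∈ M, ∃ c ∈ C, m + c = x := by
  have htop : M.addIdeal C = ⊤ := by
    refine hM.2 _ (lt_of_le_not_ge (M.le_addIdeal_left C) fun h ↦ hC ?_)
    exact (M.le_addIdeal_right C).trans h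
  exact LieSubalgebra.mem_addIdeal.mp (htop ▸ LieSubalgebra.mem_top x)

lemma strictCore_le_of_isCompletion {M C : LieSubalgebra F L} (hC : IsCompletion M C) :
    (strictCore C : LieSubalgebra F L) ≤ M := by
  have h : (strictCore C).toSubmodule ≤ M.toSubmodule := by
    rw [strictCore, LieSubmodule.sSup_toSubmodule]
    refine sSup_le ?_
    rintro _ ⟨I, hI, rfl⟩
    exact hC.2 I hI
  exact h

lemma LieIdeal.isSolvable_of_isSolvable_lie_self {I : LieIdeal F L}
    (h : LieAlgebra.IsSolvable ↥⁅I, I⁆) : LieAlgebra.IsSolvable I := by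
  obtain ⟨k, hk⟩ := (LieAlgebra.isSolvable_iff F _).mp h
  refine (LieAlgebra.isSolvable_iff F _).mpr ⟨k + 1, ?_⟩
  rw [LieIdeal.derivedSeries_eq_bot_iff] at hk ⊢
  rwa [LieAlgebra.derivedSeriesOfIdeal_add]

lemma LieIdeal.lie_self_lt_of_isSolvable {I : LieIdeal F L} (h : LieAlgebra.IsSolvable I)
    (hI : I ≠ ⊥) : ⁅I, I⁆ < I := by
  refine lt_of_le_of_ne (LieSubmodule.lie_le_right I I) fun heq ↦ hI ?_
  obtain ⟨k, hk⟩ := (LieAlgebra.isSolvable_iff F _).mp h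
  rw [LieIdeal.derivedSeries_eq_bot_iff] at hk
  rw [← hk]
  clear hk
  induction k with
  | zero => rfl
  | succ k ih => rw [LieAlgebra.derivedSeriesOfIdeal_succ, ← ih, heq]

/-- A maximal subalgebra missing some solvable ideal has an abelian ideal completion. -/
lemma exists_abelian_ideal_completion [FiniteDimensional F L] {M : LieSubalgebra F L}
    {I : LieIdeal F L} (hI : LieAlgebra.IsSolvable I) (hIM : ¬ (I : LieSubalgebra F L) ≤ M) :
    ∃ C : LieIdeal F L, IsCompletion M (C : LieSubalgebra F L) ∧
      ⁅C, C⁆ ≤ strictCore (C : LieSubalgebra F L) := by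
  obtain ⟨C, ⟨hCI, hCM⟩, hmin⟩ := (LieSubmodule.wellFoundedLT_of_isArtinian F L L).wf.has_min
    {J : LieIdeal F L | J ≤ I ∧ ¬ (J : LieSubalgebra F L) ≤ M} ⟨I, le_rfl, hIM⟩
  refine ⟨C, ⟨hCM, fun J hJ ↦ ?_⟩, le_sSup ?_⟩
  · by_contra hJM
    exact hmin J ⟨le_trans (show J ≤ C from hJ.le) hCI, hJM⟩ hJ
  · refine LieIdeal.lie_self_lt_of_isSolvable
      (LieAlgebra.le_solvable_ideal_solvable hCI hI) ?_
    rintro rfl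
    refine hCM fun x hx ↦ ?_
    rw [show x = 0 from hx]
    exact M.zero_mem

/-- A maximal subalgebra missing a perfect ideal `A`, but containing all the ideals strictly
inside `A`, has no abelian ideal completion. -/
lemma not_exists_abelian_ideal_completion {M : LieSubalgebra F L} (hM : IsCoatom M)
    {A : LieIdeal F L} (hA : ⁅A, A⁆ = A) (hAM : IsCompletion M (A : LieSubalgebra F L)) :
    ¬ ∃ C : LieIdeal F L, IsCompletion M (C : LieSubalgebra F L) ∧
      ⁅C, C⁆ ≤ strictCore (C : LieSubalgebra F L) := by
  rintro ⟨C, hC, hCab⟩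
  have hnot : ¬ A ≤ C := by
    intro hAC
    rcases hAC.eq_or_lt with rfl | hlt
    · rw [hA] at hCab
      exact hAM.1 (le_trans (show (A : LieSubalgebra F L) ≤ _ from hCab)
        (strictCore_le_of_isCompletion hC))
    · exact hAM.1 (hC.2 A hlt)
  have hinf : ((A ⊓ C : LieIdeal F L) : LieSubalgebra F L) ≤ M :=
    hAM.2 _ (show A ⊓ C < A from lt_of_le_not_ge inf_le_left fun h ↦ hnot (h.trans inf_le_right))
  -- `K` lies in `M`, and both `A` and `C` centralize `C` modulo `K`.
  let K : LieIdeal F L := (A ⊓ C) ⊔ ⁅C, C⁆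
  have hKM : ∀ x ∈ K, x ∈ M := by
    intro x hx
    obtain ⟨y, hy, z, hz, rfl⟩ := LieSubmodule.mem_sup _ _ _ |>.mp hx
    exact M.add_mem (hinf hy) (strictCore_le_of_isCompletion hC (hCab hz))
  have hCK : ∀ x ∈ C, ∀ y ∈ C, ⁅x, y⁆ ∈ K := fun x hx y hy ↦
    (le_sup_right : ⁅C, C⁆ ≤ K) (LieSubmodule.lie_mem_lie hx hy)
  have hAK : ∀ x ∈ A, ∀ y ∈ C, ⁅x, y⁆ ∈ K := fun x hx y hy ↦
    (le_sup_left : A ⊓ C ≤ K)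
      ⟨lie_mem_left F L A x y hx, lie_mem_right F L C x y hy⟩
  let N : LieIdeal F L :=
    { carrier := {x | x ∈ M ∧ ∀ c ∈ C, ⁅x, c⁆ ∈ K}
      zero_mem' := ⟨M.zero_mem, fun c _ ↦ by simp⟩
      add_mem' := fun {x y} hx hy ↦ ⟨M.add_mem hx.1 hy.1, fun c hc ↦ by
        rw [add_lie]
        exact K.add_mem (hx.2 c hc) (hy.2 c hc)⟩
      smul_mem' := fun t x hx ↦ ⟨M.smul_mem t hx.1, fun c hc ↦ by
        rw [smul_lie]
        exact K.smul_mem t (hx.2 c hc)⟩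
      lie_mem := fun {l x} hx ↦ by
        refine ⟨?_, fun c hc ↦ ?_⟩
        · obtain ⟨m, hm, c, hc, rfl⟩ := hM.exists_add_eq_of_not_ideal_le hC.1 l
          rw [add_lie, ← lie_skew c x]
          exact M.add_mem (M.lie_mem hm hx.1) (M.neg_mem (hKM _ (hx.2 c hc)))
        · rw [lie_lie]
          exact K.sub_mem (lie_mem_right F L K _ _ (hx.2 c hc))
            (hx.2 _ (lie_mem_right F L C _ _ hc)) }
  have hNM : ∀ x ∈ N, x ∈ M := fun x hx ↦ hx.1
  have hdecomp : ∀ a ∈ A, ∃ n ∈ N, ∃ c ∈ C, n + c = a := by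
    intro a ha
    obtain ⟨m, hm, c, hc, rfl⟩ := hM.exists_add_eq_of_not_ideal_le hC.1 a
    refine ⟨m, ⟨hm, fun d hd ↦ ?_⟩, c, hc, rfl⟩
    have h := K.sub_mem (hAK _ ha d hd) (hCK c hc d hd)
    rwa [add_lie, add_sub_cancel_right] at h
  have hle : ⁅A, A⁆ ≤ N ⊔ ⁅C, C⁆ := by
    rw [LieSubmodule.lieIdeal_oper_eq_span, LieSubmodule.lieSpan_le]
    rintro _ ⟨⟨a, ha⟩, ⟨b, hb⟩, rfl⟩
    obtain ⟨n, hn, c, hc, rfl⟩ := hdecomp a ha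
    obtain ⟨k, hk, d, hd, rfl⟩ := hdecomp b hb
    refine LieSubmodule.mem_sup _ _ _ |>.mpr
      ⟨⁅n, k + d⁆ + ⁅c, k⁆, N.add_mem (lie_mem_left F L N _ _ hn) (lie_mem_right F L N _ _ hk),
        ⁅c, d⁆, LieSubmodule.lie_mem_lie hc hd, ?_⟩
    simp only [lie_add, add_lie]
    abel
  refine hAM.1 fun x hx ↦ ?_
  obtain ⟨n, hn, c, hc, rfl⟩ := LieSubmodule.mem_sup _ _ _ |>.mp (hle (hA.symm ▸ hx))
  exact M.add_mem (hNM n hn) (strictCore_le_of_isCompletion hC (hCab hc))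

/-- If every maximal subalgebra containing the ideal `S` contains the ideal `A`, then each element
of `A` acts nilpotently on `L ⧸ S`. -/
lemma isNilpotent_toEnd_quotient_of_forall_isCoatom [FiniteDimensional F L] {A S : LieIdeal F L}
    (h : ∀ M : LieSubalgebra F L, IsCoatom M → (S : LieSubalgebra F L) ≤ M →
      (A : LieSubalgebra F L) ≤ M) {a : L} (ha : a ∈ A) :
    IsNilpotent (LieModule.toEnd F L (L ⧸ S) a) := by
  have hEA : ∀ x : L, ∃ e ∈ LieSubalgebra.engel F a, ∃ b ∈ A, e + b = x := by
    intro x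
    obtain ⟨k, hk⟩ := Filter.eventually_atTop.mp <|
      (LieAlgebra.ad F L a).eventually_codisjoint_ker_pow_range_pow
    have hx : x ∈ LinearMap.ker (LieAlgebra.ad F L a ^ (k + 1)) ⊔
        LinearMap.range (LieAlgebra.ad F L a ^ (k + 1)) :=
      (codisjoint_iff.mp (hk (k + 1) k.le_succ)).symm ▸ Submodule.mem_top
    obtain ⟨e, he, _, ⟨y, rfl⟩, rfl⟩ := Submodule.mem_sup.mp hx
    refine ⟨e, (LieSubalgebra.mem_engel_iff F a e).mpr ⟨k + 1, he⟩, _, ?_, rfl⟩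
    rw [pow_succ', Module.End.mul_apply, LieAlgebra.ad_apply]
    exact lie_mem_left F L A _ _ ha
  have htop : (LieSubalgebra.engel F a).addIdeal S = ⊤ := by
    rcases eq_top_or_exists_le_coatom ((LieSubalgebra.engel F a).addIdeal S) with h' | ⟨M, hM, hle⟩
    · exact h'
    refine absurd (eq_top_iff.mpr fun x _ ↦ ?_) hM.1
    obtain ⟨e, he, b, hb, rfl⟩ := hEA x
    exact M.add_mem (hle (LieSubalgebra.le_addIdeal_left _ _ he))
      (h M hM ((LieSubalgebra.le_addIdeal_right _ _).trans hle) hb)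
  have hmk : ∀ (n : ℕ) (x : L), (LieModule.toEnd F L (L ⧸ S) a ^ n) (LieSubmodule.Quotient.mk x) =
      LieSubmodule.Quotient.mk ((LieAlgebra.ad F L a ^ n) x) := by
    intro n
    induction n with
    | zero => intro x; rfl
    | succ n ih =>
      intro x
      rw [pow_succ, pow_succ, Module.End.mul_apply, Module.End.mul_apply, ← ih]
      rfl
  rw [Module.End.isNilpotent_iff_of_finite]
  intro q
  obtain ⟨x, rfl⟩ := LieSubmodule.Quotient.surjective_mk' S q
  obtain ⟨e, he, s, hs, rfl⟩ := LieSubalgebra.mem_addIdeal.mp (htop ▸ LieSubalgebra.mem_top x)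
  obtain ⟨n, hn⟩ := (LieSubalgebra.mem_engel_iff F a e).mp he
  refine ⟨n, ?_⟩
  have hs0 : LieSubmodule.Quotient.mk' S s = 0 := (LieSubmodule.Quotient.mk_eq_zero S).mpr hs
  rw [map_add, hs0, add_zero]
  refine (hmk n e).trans ?_
  rw [hn]
  rfl

/-- A perfect ideal `A` not contained in the ideal `S` is missed by some maximal subalgebra
containing `S`. -/
lemma exists_isCoatom_of_lie_self_eq [FiniteDimensional F L] {A S : LieIdeal F L}
    (hA : ⁅A, A⁆ = A) (hAS : ¬ A ≤ S) :
    ∃ M : LieSubalgebra F L, IsCoatom M ∧ (S : LieSubalgebra F L) ≤ M ∧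
      ¬ (A : LieSubalgebra F L) ≤ M := by
  by_contra! h
  have hnil : LieModule.IsNilpotent A (L ⧸ S) :=
    (LieModule.isNilpotent_iff_forall (R := F)).mpr fun a ↦
      isNilpotent_toEnd_quotient_of_forall_isCoatom h a.2
  obtain ⟨k, hk⟩ := (LieModule.isNilpotent_iff F A (L ⧸ S)).mp hnil
  have hle : ∀ n, LieSubmodule.map (LieSubmodule.Quotient.mk' S) A ≤ A.lcs (L ⧸ S) n := by
    intro n
    induction n with
    | zero => exact le_top
    | succ n ih =>
      rw [LieIdeal.lcs_succ]
      calc LieSubmodule.map (LieSubmodule.Quotient.mk' S) A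
          = ⁅A, LieSubmodule.map (LieSubmodule.Quotient.mk' S) A⁆ := by
            rw [← LieSubmodule.map_bracket_eq, hA]
        _ ≤ _ := LieSubmodule.mono_lie_right A ih
  have hbot : A.lcs (L ⧸ S) k = ⊥ := by
    rw [← LieSubmodule.toSubmodule_inj, LieIdeal.coe_lcs_eq, hk]
    rfl
  refine hAS fun x hx ↦ (LieSubmodule.Quotient.mk_eq_zero S).mp ?_
  have hx' := hle k (LieSubmodule.mem_map_of_mem hx)
  rwa [hbot, LieSubmodule.mem_bot] at hx'

/-- A non-solvable ideal is missed by some maximal subalgebra without abelian ideal completions. -/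
lemma exists_isCoatom_of_not_isSolvable [FiniteDimensional F L] {I : LieIdeal F L}
    (hI : ¬ LieAlgebra.IsSolvable I) :
    ∃ M : LieSubalgebra F L, (IsCoatom M ∧
      ¬ ∃ C : LieIdeal F L, IsCompletion M (C : LieSubalgebra F L) ∧
        ⁅C, C⁆ ≤ strictCore (C : LieSubalgebra F L)) ∧ ¬ (I : LieSubalgebra F L) ≤ M := by
  obtain ⟨A, ⟨hAI, hAs⟩, hmin⟩ := (LieSubmodule.wellFoundedLT_of_isArtinian F L L).wf.has_min
    {J : LieIdeal F L | J ≤ I ∧ ¬ LieAlgebra.IsSolvable J} ⟨I, le_rfl, hI⟩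
  have hA : ⁅A, A⁆ = A := by
    by_contra hne
    exact hmin ⁅A, A⁆ ⟨(LieSubmodule.lie_le_right A A).trans hAI,
      fun h ↦ hAs (LieIdeal.isSolvable_of_isSolvable_lie_self h)⟩
      (lt_of_le_of_ne (LieSubmodule.lie_le_right A A) hne)
  obtain ⟨M, hM, hRM, hAM⟩ := exists_isCoatom_of_lie_self_eq (S := LieAlgebra.radical F L) hA
    fun h ↦ hAs ((LieAlgebra.LieIdeal.solvable_iff_le_radical F L A).mpr h)
  refine ⟨M, ⟨hM, not_exists_abelian_ideal_completion hM hA ⟨hAM, fun J hJ ↦ ?_⟩⟩,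
    fun h ↦ hAM (le_trans (show (A : LieSubalgebra F L) ≤ I from hAI) h)⟩
  have hJs : LieAlgebra.IsSolvable J := by
    by_contra hJs
    exact hmin J ⟨le_trans (show J ≤ A from hJ.le) hAI, hJs⟩ hJ
  exact le_trans (show (J : LieSubalgebra F L) ≤ LieAlgebra.radical F L from
    (LieAlgebra.LieIdeal.solvable_iff_le_radical F L J).mp hJs) hRM

end Helpers

/-- Let `F*(L)` be the intersection of all maximal subalgebras of `L` having no
abelian ideal completion (`F*(L) = L` if there are none), and `φ*(L)` the largest ideal of `L`
contained in `F*(L)`. Then `φ*(L)` is the solvable radical `R(L)` of `L`. -/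
theorem statement10 {F L : Type*} [Field F] [LieRing L] [LieAlgebra F L] [FiniteDimensional F L] :
    idealCore (sInf {M : LieSubalgebra F L | IsCoatom M ∧
        ¬ ∃ C : LieIdeal F L, IsCompletion M (C : LieSubalgebra F L) ∧
          ⁅C, C⁆ ≤ strictCore (C : LieSubalgebra F L)}) =
      LieAlgebra.radical F L := by
  refine le_antisymm (sSup_le fun I hI ↦ ?_) (le_sSup ?_)
  · rw [← LieAlgebra.LieIdeal.solvable_iff_le_radical]
    by_contra hIs
    obtain ⟨M, hM, hIM⟩ := exists_isCoatom_of_not_isSolvable hIs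
    exact hIM (le_trans hI (sInf_le hM))
  · refine le_sInf (α := LieSubalgebra F L) ?_
    rintro M ⟨-, hM⟩
    by_contra hRM
    exact hM (exists_abelian_ideal_completion inferInstance hRM)
end
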